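/- Let ℓ = 163 and let L be the unique degree-3 intermediate field of ℚ(ζ_ℓ)/ℚ. Then the class number of L is 4, and the ideal class group of L is isomorphic to (ℤ/2ℤ) × (ℤ/2ℤ). -/

import Mathlib

instance (ℓ : ℕ+) : FiniteDimensional ℚ (CyclotomicField ℓ ℚ) :=
  haveI : IsCyclotomicExtension {(ℓ : ℕ)} ℚ (CyclotomicField ℓ ℚ) :=
    CyclotomicField.isCyclotomicExtension _ _
  IsCyclotomicExtension.finiteDimensional {(ℓ : ℕ)} ℚ _

instance (ℓ : ℕ+) (L : IntermediateField ℚ (CyclotomicField ℓ ℚ)) : NumberField L := ⟨⟩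

/-!
Let `θ = η + 4`, where `η` is a cubic Gauss period of conductor `163`. The minimal polynomial
`X ^ 3 - 11 * X ^ 2 - 14 * X - 1` of `θ` has discriminant `163 ^ 2`, which forces `𝓞 L = ℤ[θ]`, and
the Minkowski bound of `L` is `2 * 163 / 9 < 37`. The factorizations of `n - θ` for a few small
integers `n` express the classes of all primes of norm at most `36` through those of
`𝔭 = (5, 1 - θ)` and `𝔮 = (5, 2 - θ)`, whose squares are generated by `θ - 1` and
`(θ + 1) * (12 - θ)`. None of `𝔭`, `𝔮` and `𝔭 * 𝔮` is principal: otherwise the given generator of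
its square would be a unit times a square. That generator is a square modulo the three primes above
`23`, and the quadratic characters there separate the units modulo squares, so the unit, and hence
the generator, would be a square. But the generator is not a square modulo some prime above `31`.
-/

open scoped nonZeroDivisors NumberField
open Polynomial NumberField

/-! ### Group theory -/

section CommGroup

variable {G : Type*} [CommGroup G]

theorem isKleinFour_of_closure_pair_eq_top {a b : G} (hab : Subgroup.closure {a, b} = ⊤)
    (ha : a ^ 2 = 1) (hb : b ^ 2 = 1) (ha₁ : a ≠ 1) (hb₁ : b ≠ 1) (hab₁ : a * b ≠ 1) :
    IsKleinFour G := by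
  have hpow : ∀ g : G, g ^ 2 = 1 := by
    have hker : (⊤ : Subgroup G) ≤ (powMonoidHom 2).ker := by
      rw [← hab, Subgroup.closure_le, Set.pair_subset_iff]
      exact ⟨ha, hb⟩
    exact fun g ↦ hker (Subgroup.mem_top g)
  have : Group.FG G := Group.fg_iff.2 ⟨_, hab, Set.toFinite _⟩
  have hrank : Group.rank G ≤ 2 := by
    classical
    exact (Group.rank_le (S := {a, b}) (by simpa using hab)).trans Finset.card_le_two
  have hdvd : Nat.card G ∣ 2 ^ 2 :=
    (card_dvd_exponent_pow_rank' G hpow).trans (pow_dvd_pow 2 hrank)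
  have hcard : 2 < Nat.card G := by
    have : Finite G := Nat.finite_of_card_ne_zero (ne_zero_of_dvd_ne_zero (by norm_num) hdvd)
    have := Fintype.ofFinite G
    have hne : a ≠ b := fun h ↦ hab₁ (by rwa [← h, ← sq])
    rw [Nat.card_eq_fintype_card, Fintype.two_lt_card_iff]
    exact ⟨1, a, b, ha₁.symm, hb₁.symm, hne⟩
  constructor
  · obtain ⟨k, hk, hk'⟩ := (Nat.dvd_prime_pow Nat.prime_two).1 hdvd
    interval_cases k <;> omega
  · have : Nontrivial G := ⟨⟨a, 1, ha₁⟩⟩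
    exact Monoid.exponent_eq_prime_iff Nat.prime_two |>.2 fun g hg ↦ orderOf_eq_prime (hpow g) hg

theorem ker_eq_range_powMonoidHom {S : Finset G} (hS : Subgroup.closure (S : Set G) = ⊤)
    {H : Type*} [Group H] {F : G →* H} (hF : Function.Surjective F) {n : ℕ} (hn : n ≠ 0)
    (hH : ∀ h : H, h ^ n = 1) (hcard : n ^ S.card ≤ Nat.card H) :
    F.ker = (powMonoidHom n : G →* G).range := by
  have : Group.FG G := Group.fg_iff.2 ⟨S, hS, S.finite_toSet⟩
  set N : Subgroup G := (powMonoidHom n : G →* G).range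
  have hle : N ≤ F.ker := by
    rintro _ ⟨g, rfl⟩
    simp [MonoidHom.mem_ker, hH]
  have hpow : ∀ q : G ⧸ N, q ^ n = 1 := by
    rintro ⟨g⟩
    exact (QuotientGroup.eq_one_iff _).2 ⟨g, rfl⟩
  have hdvd : N.index ∣ n ^ Group.rank (G ⧸ N) := card_dvd_exponent_pow_rank' _ hpow
  have : N.FiniteIndex := ⟨ne_zero_of_dvd_ne_zero (by positivity) hdvd⟩
  have hindex : N.index ≤ F.ker.index := calc
    N.index ≤ n ^ Group.rank (G ⧸ N) := Nat.le_of_dvd (by positivity) hdvd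
    _ ≤ n ^ Group.rank G := Nat.pow_le_pow_right hn.bot_lt
      (Group.rank_le_of_surjective (QuotientGroup.mk' N) (QuotientGroup.mk'_surjective N))
    _ ≤ n ^ S.card := Nat.pow_le_pow_right hn.bot_lt (Group.rank_le hS)
    _ ≤ Nat.card H := hcard
    _ = F.ker.index := by rw [Subgroup.index_ker, F.range_eq_top.2 hF, Subgroup.card_top]
  exact (hle.eq_of_not_lt fun hlt ↦ (Subgroup.index_strictAnti hlt).not_ge hindex).symm

theorem surjective_of_forall_eq_mulSingle {ι : Type*} [Finite ι] [DecidableEq ι]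
    (F : G →* (ι → ℤˣ)) (e : ι → G) (he : ∀ i, F (e i) = Pi.mulSingle i (-1)) :
    Function.Surjective F := by
  have := Fintype.ofFinite ι
  intro x
  refine ⟨∏ i, if x i = 1 then 1 else e i, ?_⟩
  rw [map_prod, ← Finset.univ_prod_mulSingle x]
  refine Finset.prod_congr rfl fun i _ ↦ ?_
  rcases Int.units_eq_one_or (x i) with h | h <;> simp [h, he]

end CommGroup

/-! ### Degree-one primes and ideal classes -/

section IdealsWithClassIn

variable {R : Type*} [CommRing R] [IsDedekindDomain R]

/-- The nonzero ideals whose class lies in `V`. -/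
noncomputable def idealsWithClassIn (V : Subgroup (ClassGroup R)) : Submonoid (Ideal R) :=
  (V.toSubmonoid.comap ClassGroup.mk0).map (Ideal R)⁰.subtype

variable {V : Subgroup (ClassGroup R)} {I J : Ideal R}

theorem coe_mem_idealsWithClassIn {I : (Ideal R)⁰} :
    (I : Ideal R) ∈ idealsWithClassIn V ↔ ClassGroup.mk0 I ∈ V := by
  simp [idealsWithClassIn]

theorem span_singleton_mem_idealsWithClassIn {a : R} (ha : a ≠ 0) :
    Ideal.span {a} ∈ idealsWithClassIn V := by
  have hmem : Ideal.span {a} ∈ (Ideal R)⁰ := by simpa using ha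
  refine (coe_mem_idealsWithClassIn (I := ⟨_, hmem⟩)).2 ?_
  rw [(ClassGroup.mk0_eq_one_iff hmem).2 ⟨a, rfl⟩]
  exact V.one_mem

theorem mem_idealsWithClassIn_of_mul_left (hI : I ∈ idealsWithClassIn V)
    (hIJ : I * J ∈ idealsWithClassIn V) : J ∈ idealsWithClassIn V := by
  obtain ⟨I, hI, rfl⟩ := hI
  obtain ⟨N, hN, hN'⟩ := hIJ
  replace hN' : (N : Ideal R) = I * J := hN'
  have hJ : J ∈ (Ideal R)⁰ := (mul_mem_nonZeroDivisors.1 (hN' ▸ N.2)).2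
  lift J to (Ideal R)⁰ using hJ
  obtain rfl : N = I * J := Subtype.ext hN'
  rw [coe_mem_idealsWithClassIn]
  exact (V.mul_mem_cancel_left hI).1 (by simpa using hN)

theorem mem_idealsWithClassIn_of_forall_isPrime (hI : I ≠ ⊥)
    (h : ∀ P : Ideal R, P.IsPrime → P ∣ I → P ∈ idealsWithClassIn V) :
    I ∈ idealsWithClassIn V := by
  rw [← Ideal.prod_normalizedFactors_eq_self hI]
  refine Submonoid.multiset_prod_mem _ _ fun P hP ↦ h P ?_ ?_
  · exact Ideal.isPrime_of_prime (UniqueFactorizationMonoid.prime_of_normalized_factor P hP)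
  · exact UniqueFactorizationMonoid.dvd_of_mem_normalizedFactors hP

theorem eq_top_of_forall_isPrime
    (h : ∀ C, ∃ I : (Ideal R)⁰, ClassGroup.mk0 I = C ∧
      ∀ P : Ideal R, P.IsPrime → P ∣ I → P ∈ idealsWithClassIn V) : V = ⊤ := by
  refine eq_top_iff.2 fun C _ ↦ ?_
  obtain ⟨I, rfl, hI⟩ := h C
  exact coe_mem_idealsWithClassIn.1
    (mem_idealsWithClassIn_of_forall_isPrime (nonZeroDivisors.coe_ne_zero I) hI)

end IdealsWithClassIn

section DegreeOnePrime

theorem norm_algebraMap_sub_gen {A S : Type*} [CommRing A] [IsDomain A] [CommRing S] [Algebra A S]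
    (B : PowerBasis A S) (x : A) :
    Algebra.norm A (algebraMap A S x - B.gen) = (minpoly A B.gen).eval x := by
  have := B.finite
  rw [← charpoly_leftMulMatrix B, Matrix.eval_charpoly, Algebra.norm_eq_matrix_det B.basis,
    map_sub, AlgHom.commutes, Matrix.scalar_apply]
  rfl

/-- The ideal `(q, n - θ)`: when `q` is a prime number and `n` is a root modulo `q` of the minimal
polynomial of a generator `θ` of the ring, these are the degree-one primes above `q`. -/
def degreeOnePrime {R : Type*} [CommRing R] (θ : R) (q : ℕ) (n : ℤ) : Ideal R :=
  Ideal.span {(q : R), (n : R) - θ}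

variable {R : Type*} [CommRing R] {θ : R} {q : ℕ} {m n : ℤ}

theorem natCast_mem_degreeOnePrime : (q : R) ∈ degreeOnePrime θ q n :=
  Ideal.subset_span (Set.mem_insert _ _)

theorem sub_mem_degreeOnePrime : (n : R) - θ ∈ degreeOnePrime θ q n :=
  Ideal.subset_span (Set.mem_insert_of_mem _ rfl)

theorem degreeOnePrime_le_iff {I : Ideal R} :
    degreeOnePrime θ q n ≤ I ↔ (q : R) ∈ I ∧ (n : R) - θ ∈ I := by
  simp [degreeOnePrime, Ideal.span_le, Set.pair_subset_iff]

theorem intCast_mem_degreeOnePrime (h : (q : ℤ) ∣ m) : (m : R) ∈ degreeOnePrime θ q n := by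
  obtain ⟨k, rfl⟩ := h
  rw [Int.cast_mul, Int.cast_natCast]
  exact Ideal.mul_mem_right _ _ natCast_mem_degreeOnePrime

theorem degreeOnePrime_congr (h : (q : ℤ) ∣ m - n) :
    degreeOnePrime θ q m = degreeOnePrime θ q n := by
  suffices hle : ∀ m n : ℤ, (q : ℤ) ∣ m - n → degreeOnePrime θ q m ≤ degreeOnePrime θ q n from
    (hle m n h).antisymm (hle n m (dvd_sub_comm.1 h))
  refine fun m n h ↦ degreeOnePrime_le_iff.2 ⟨natCast_mem_degreeOnePrime, ?_⟩
  simpa using add_mem (intCast_mem_degreeOnePrime h) (sub_mem_degreeOnePrime (θ := θ) (n := n))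

theorem eq_top_of_natCast_mem_of_intCast_mem {I : Ideal R} (hq : q.Prime) (hqI : (q : R) ∈ I)
    (hm : (m : R) ∈ I) (hqm : ¬ (q : ℤ) ∣ m) : I = ⊤ := by
  have hcop : IsCoprime (q : ℤ) m := (Nat.prime_iff_prime_int.1 hq).coprime_iff_not_dvd.2 hqm
  obtain ⟨a, b, hab⟩ := hcop.map (Int.castRingHom R)
  rw [Ideal.eq_top_iff_one, ← hab]
  exact add_mem (I.mul_mem_left _ (by simpa using hqI)) (I.mul_mem_left _ (by simpa using hm))

theorem isCoprime_degreeOnePrime (hq : q.Prime) (h : ¬ (q : ℤ) ∣ m - n) :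
    IsCoprime (degreeOnePrime θ q m) (degreeOnePrime θ q n) := by
  rw [Ideal.isCoprime_iff_sup_eq]
  refine eq_top_of_natCast_mem_of_intCast_mem hq
    (Ideal.mem_sup_left natCast_mem_degreeOnePrime) (m := m - n) ?_ h
  have := sub_mem (Ideal.mem_sup_left (sub_mem_degreeOnePrime (θ := θ) (q := q) (n := m)))
    (Ideal.mem_sup_right (sub_mem_degreeOnePrime (θ := θ) (q := q) (n := n)))
  simpa using this

variable (B : PowerBasis ℤ R)

theorem exists_intCast_sub_mem_span (n : ℤ) (x : R) :
    ∃ m : ℤ, (m : R) - x ∈ Ideal.span {(n : R) - B.gen} := by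
  obtain ⟨f, rfl⟩ := B.exists_eq_aeval' x
  refine ⟨f.eval n, Ideal.mem_span_singleton.2 ?_⟩
  simpa [aeval_def, eval₂_eq_eval_map] using
    sub_dvd_eval_sub (n : R) B.gen (f.map (algebraMap ℤ R))

theorem intCast_eval_minpoly_mem {I : Ideal R} (h : (n : R) - θ ∈ I) :
    (((minpoly ℤ θ).eval n : ℤ) : R) ∈ I := by
  have hdvd := sub_dvd_eval_sub (n : R) θ ((minpoly ℤ θ).map (algebraMap ℤ R))
  refine I.mem_of_dvd ?_ h
  rw [eval_map_algebraMap, eval_map_algebraMap, minpoly.aeval, sub_zero,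
    ← eq_intCast (algebraMap ℤ R) n, aeval_algebraMap_apply, coe_aeval_eq_eval] at hdvd
  simpa using hdvd

theorem dvd_eval_minpoly_of_sub_mem {I : Ideal R} (hI : I ≠ ⊤) (hq : q.Prime) (hqI : (q : R) ∈ I)
    (h : (n : R) - θ ∈ I) : (q : ℤ) ∣ (minpoly ℤ θ).eval n :=
  of_not_not fun hdvd ↦ hI <|
    eq_top_of_natCast_mem_of_intCast_mem hq hqI (intCast_eval_minpoly_mem h) hdvd

theorem eq_degreeOnePrime {I : Ideal R} (hI : I ≠ ⊤) (hq : q.Prime) (hqI : (q : R) ∈ I)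
    (h : (n : R) - B.gen ∈ I) : I = degreeOnePrime B.gen q n := by
  refine le_antisymm (fun x hx ↦ ?_) (degreeOnePrime_le_iff.2 ⟨hqI, h⟩)
  obtain ⟨m, hm⟩ := exists_intCast_sub_mem_span B n x
  have hmI : (m : R) ∈ I := by
    simpa using add_mem ((Ideal.span_singleton_le_iff_mem I).2 h hm) hx
  have hqm : (q : ℤ) ∣ m := of_not_not fun hqm ↦ hI <|
    eq_top_of_natCast_mem_of_intCast_mem hq hqI hmI hqm
  simpa using sub_mem (intCast_mem_degreeOnePrime hqm)
    ((Ideal.span_singleton_le_iff_mem _).2 sub_mem_degreeOnePrime hm)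

theorem exists_ringHom_zmod (h : (q : ℤ) ∣ (minpoly ℤ B.gen).eval n) :
    ∃ φ : R →+* ZMod q, φ B.gen = n := by
  refine ⟨(B.lift (n : ZMod q) ?_).toRingHom, B.lift_gen _ _⟩
  rw [aeval_def, eval₂_at_intCast]
  simpa [ZMod.intCast_zmod_eq_zero_iff_dvd] using h

end DegreeOnePrime

section Monogenic

variable {R : Type*} [CommRing R] [IsDedekindDomain R] [Module.Free ℤ R]

theorem absNorm_ker_ringHom_zmod {q : ℕ} (φ : R →+* ZMod q) :
    Ideal.absNorm (RingHom.ker φ) = q := by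
  rw [Ideal.absNorm_apply, Submodule.cardQuot_apply]
  exact (Nat.card_congr (RingHom.quotientKerEquivOfSurjective
    (ZMod.ringHom_surjective φ)).toEquiv).trans (Nat.card_zmod q)

theorem span_natCast_mem_idealsWithClassIn {V : Subgroup (ClassGroup R)} {n : ℕ}
    (hn : n ≠ 0) :
    Ideal.span {(n : R)} ∈ idealsWithClassIn V :=
  have : IsAddTorsionFree R := .of_isTorsionFree ℤ R
  have := CharZero.of_isAddTorsionFree R R
  span_singleton_mem_idealsWithClassIn (Nat.cast_ne_zero.2 hn)

variable (B : PowerBasis ℤ R) {q : ℕ} {n : ℤ}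

theorem absNorm_degreeOnePrime (hq : q.Prime) (h : (q : ℤ) ∣ (minpoly ℤ B.gen).eval n) :
    Ideal.absNorm (degreeOnePrime B.gen q n) = q := by
  obtain ⟨φ, hφ⟩ := exists_ringHom_zmod B h
  have := Fact.mk hq
  have hker : RingHom.ker φ = degreeOnePrime B.gen q n :=
    eq_degreeOnePrime B (RingHom.ker_ne_top φ) hq (by simp [RingHom.mem_ker])
      (by simp [RingHom.mem_ker, hφ])
  rw [← hker, absNorm_ker_ringHom_zmod]

theorem exists_eq_degreeOnePrime_of_absNorm_eq {I : Ideal R} (hq : q.Prime)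
    (hI : Ideal.absNorm I = q) :
    ∃ n : ℤ, (q : ℤ) ∣ (minpoly ℤ B.gen).eval n ∧ I = degreeOnePrime B.gen q n := by
  have := Fact.mk hq
  have hcard : Nat.card (R ⧸ I) = q := hI
  have := Nat.finite_of_card_ne_zero (hcard ▸ hq.ne_zero)
  have := Fintype.ofFinite (R ⧸ I)
  let e := ZMod.ringEquivOfPrime (R ⧸ I) hq (by rwa [← Nat.card_eq_fintype_card])
  obtain ⟨n, hn⟩ := ZMod.intCast_surjective (e.symm (Ideal.Quotient.mk I B.gen))
  have hmem : (n : R) - B.gen ∈ I := by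
    rw [← Ideal.Quotient.eq, map_intCast, e.symm_apply_eq.1 hn.symm, map_intCast]
  have htop : I ≠ ⊤ := fun h ↦ hq.ne_one (by rw [← hI, h, Ideal.absNorm_top])
  have hqI : (q : R) ∈ I := hI ▸ I.absNorm_mem
  exact ⟨n, dvd_eval_minpoly_of_sub_mem htop hq hqI hmem, eq_degreeOnePrime B htop hq hqI hmem⟩

variable [Module.Finite ℤ R]

theorem prod_degreeOnePrime_eq {I : Ideal R} (hn : (n : R) - B.gen ∈ I) {l : List ℕ}
    (hl : ∀ q ∈ l, q.Prime) (hI : Ideal.absNorm I = l.prod) :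
    (l.map (degreeOnePrime B.gen · n)).prod = I := by
  induction l generalizing I with
  | nil => exact (Ideal.one_eq_top).trans (Ideal.absNorm_eq_one_iff.1 hI).symm
  | cons q l ih =>
    rw [List.forall_mem_cons] at hl
    rw [List.prod_cons] at hI
    obtain ⟨Q, hQ, hQq, J, rfl⟩ :=
      I.exists_isMaximal_dvd_of_dvd_absNorm' hl.1 (hI ▸ dvd_mul_right _ _)
    have hqQ : (q : R) ∈ Q := by
      have hmem : (q : ℤ) ∈ Q.under ℤ := by
        rw [hQq]
        exact Ideal.mem_span_singleton_self _
      rwa [Ideal.under_def, Ideal.mem_comap, map_natCast] at hmem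
    have hnQ : (n : R) - B.gen ∈ Q := (Ideal.mul_le_left : Q * J ≤ Q) hn
    have hnJ : (n : R) - B.gen ∈ J := (Ideal.mul_le_right : Q * J ≤ J) hn
    have hQP := eq_degreeOnePrime B hQ.ne_top hl.1 hqQ hnQ
    have hdvd := dvd_eval_minpoly_of_sub_mem hQ.ne_top hl.1 hqQ hnQ
    rw [map_mul, hQP, absNorm_degreeOnePrime B hl.1 hdvd] at hI
    rw [List.map_cons, List.prod_cons, ← hQP,
      ih hnJ hl.2 (Nat.eq_of_mul_eq_mul_left hl.1.pos hI)]

theorem prod_degreeOnePrime_eq_span {l : List ℕ} (hl : ∀ q ∈ l, q.Prime)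
    (hn : ((minpoly ℤ B.gen).eval n).natAbs = l.prod) :
    (l.map (degreeOnePrime B.gen · n)).prod = Ideal.span {(n : R) - B.gen} := by
  refine prod_degreeOnePrime_eq B (Ideal.mem_span_singleton_self _) hl ?_
  rw [← hn, ← norm_algebraMap_sub_gen, Ideal.absNorm_span_singleton, eq_intCast]

theorem prod_degreeOnePrime_eq_span_natCast {ι : Type*} [Fintype ι] (hq : q.Prime) {r : ι → ℤ}
    (hι : Fintype.card ι = Module.finrank ℤ R) (hr : ∀ i, (q : ℤ) ∣ (minpoly ℤ B.gen).eval (r i))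
    (hinj : Function.Injective fun i ↦ (r i : ZMod q)) :
    ∏ i, degreeOnePrime B.gen q (r i) = Ideal.span {(q : R)} := by
  have hdvd : ∏ i, degreeOnePrime B.gen q (r i) ∣ Ideal.span {(q : R)} := by
    refine Fintype.prod_dvd_of_coprime (fun i j hij ↦ isCoprime_degreeOnePrime hq ?_) fun i ↦ ?_
    · simpa [← ZMod.intCast_zmod_eq_zero_iff_dvd, sub_eq_zero] using hinj.ne hij
    · rw [Ideal.dvd_span_singleton]
      exact natCast_mem_degreeOnePrime
  obtain ⟨J, hJ⟩ := hdvd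
  have hnorm := congrArg Ideal.absNorm hJ
  simp only [Ideal.absNorm_span_natCast, map_mul, map_prod, absNorm_degreeOnePrime B hq (hr _),
    Finset.prod_const, Finset.card_univ, hι] at hnorm
  have hJ₁ : Ideal.absNorm J = 1 := (Nat.mul_eq_left (pow_ne_zero _ hq.ne_zero)).1 hnorm.symm
  rw [hJ, Ideal.absNorm_eq_one_iff.1 hJ₁, Ideal.mul_top]

variable {V : Subgroup (ClassGroup R)}

theorem mem_idealsWithClassIn_of_natCast_mem (hrank : Module.finrank ℤ R = 3) (hq : q.Prime)
    (h : ∀ n : ℤ, (q : ℤ) ∣ (minpoly ℤ B.gen).eval n →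
      degreeOnePrime B.gen q n ∈ idealsWithClassIn V)
    {P : Ideal R} (hP : P ≠ ⊤) (hqP : (q : R) ∈ P) : P ∈ idealsWithClassIn V := by
  have hdeg : ∀ {I : Ideal R}, Ideal.absNorm I = q ^ 1 → I ∈ idealsWithClassIn V := fun hI ↦ by
    obtain ⟨n, hn, rfl⟩ := exists_eq_degreeOnePrime_of_absNorm_eq B hq (hI.trans (pow_one q))
    exact h n hn
  obtain ⟨J, hJ⟩ := Ideal.dvd_span_singleton.2 hqP
  have hq₀ : Ideal.span {(q : R)} ∈ idealsWithClassIn V :=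
    span_natCast_mem_idealsWithClassIn hq.ne_zero
  have hnorm : Ideal.absNorm P * Ideal.absNorm J = q ^ 3 := by
    rw [← map_mul, ← hJ, Ideal.absNorm_span_natCast, hrank]
  obtain ⟨i, hi, hPi⟩ := (Nat.dvd_prime_pow hq).1 ⟨_, hnorm.symm⟩
  interval_cases i
  · exact absurd (Ideal.absNorm_eq_one_iff.1 hPi) hP
  · exact hdeg hPi
  · have hJq : Ideal.absNorm J = q ^ 1 :=
      Nat.eq_of_mul_eq_mul_left (pow_pos hq.pos 2) (by rw [← hPi, hnorm, hPi, ← pow_add])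
    exact mem_idealsWithClassIn_of_mul_left (hdeg hJq) (by rwa [mul_comm, ← hJ])
  · have hJ₁ : Ideal.absNorm J = 1 :=
      (Nat.mul_eq_left (pow_ne_zero 3 hq.ne_zero)).1 (hPi ▸ hnorm)
    rwa [hJ, Ideal.absNorm_eq_one_iff.1 hJ₁, Ideal.mul_top] at hq₀

theorem eq_top_of_forall_degreeOnePrime_mem (hrank : Module.finrank ℤ R = 3) {M : ℕ}
    (hM : ∀ C, ∃ I : (Ideal R)⁰, ClassGroup.mk0 I = C ∧ Ideal.absNorm (I : Ideal R) ≤ M)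
    (h : ∀ q ≤ M, q.Prime → ∀ n : ℤ, (q : ℤ) ∣ (minpoly ℤ B.gen).eval n →
      degreeOnePrime B.gen q n ∈ idealsWithClassIn V) : V = ⊤ := by
  refine eq_top_of_forall_isPrime fun C ↦ ?_
  obtain ⟨I, hI, hIM⟩ := hM C
  refine ⟨I, hI, fun P hP hPI ↦ ?_⟩
  have hP₀ : P ≠ ⊥ := ne_zero_of_dvd_ne_zero (nonZeroDivisors.coe_ne_zero I) hPI
  have := hP.isMaximal hP₀
  obtain ⟨q, k, hk, hqP, hq, hPq⟩ := P.exists_prime_and_absNorm_eq_pow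
  refine mem_idealsWithClassIn_of_natCast_mem B hrank hq (h q ?_ hq) hP.ne_top hqP
  calc q ≤ q ^ k := Nat.le_self_pow hk.ne' q
    _ = Ideal.absNorm P := hPq.symm
    _ ≤ Ideal.absNorm (I : Ideal R) := Nat.le_of_dvd (Ideal.absNorm_pos_of_nonZeroDivisors I)
      (map_dvd Ideal.absNorm hPI)
    _ ≤ M := hIM

theorem exists_dvd_sub_of_dvd_eval_minpoly {ι : Type*} [Fintype ι] (hq : q.Prime) {r : ι → ℤ}
    (hι : Fintype.card ι = Module.finrank ℤ R) (hr : ∀ i, (q : ℤ) ∣ (minpoly ℤ B.gen).eval (r i))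
    (hinj : Function.Injective fun i ↦ (r i : ZMod q))
    (hn : (q : ℤ) ∣ (minpoly ℤ B.gen).eval n) : ∃ i, (q : ℤ) ∣ n - r i := by
  by_contra! hne
  have hcop : IsCoprime (degreeOnePrime B.gen q n) (Ideal.span {(q : R)}) := by
    rw [← prod_degreeOnePrime_eq_span_natCast B hq hι hr hinj]
    exact IsCoprime.prod_right fun i _ ↦ isCoprime_degreeOnePrime hq (hne i)
  have hunit := hcop.isUnit_of_dvd' dvd_rfl (Ideal.dvd_span_singleton.2 natCast_mem_degreeOnePrime)
  have hnorm := absNorm_degreeOnePrime B hq hn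
  rw [Ideal.isUnit_iff.1 hunit, Ideal.absNorm_top] at hnorm
  exact hq.ne_one hnorm.symm

theorem degreeOnePrime_mem_idealsWithClassIn {ι : Type*} [Fintype ι] (hq : q.Prime) {r : ι → ℤ}
    (hι : Fintype.card ι = Module.finrank ℤ R) (hr : ∀ i, (q : ℤ) ∣ (minpoly ℤ B.gen).eval (r i))
    (hinj : Function.Injective fun i ↦ (r i : ZMod q)) (j : ι)
    (hV : ∀ i ≠ j, degreeOnePrime B.gen q (r i) ∈ idealsWithClassIn V)
    (hn : (q : ℤ) ∣ (minpoly ℤ B.gen).eval n) :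
    degreeOnePrime B.gen q n ∈ idealsWithClassIn V := by
  classical
  have hq₀ := span_natCast_mem_idealsWithClassIn (R := R) (V := V) hq.ne_zero
  obtain ⟨i, hi⟩ := exists_dvd_sub_of_dvd_eval_minpoly B hq hι hr hinj hn
  rw [degreeOnePrime_congr hi]
  rcases eq_or_ne i j with rfl | hij
  · rw [← prod_degreeOnePrime_eq_span_natCast B hq hι hr hinj,
      ← Finset.prod_erase_mul _ _ (Finset.mem_univ i)] at hq₀
    exact mem_idealsWithClassIn_of_mul_left
      (Submonoid.prod_mem _ fun k hk ↦ hV k (Finset.ne_of_mem_erase hk)) hq₀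
  · exact hV i hij

theorem degreeOnePrime_mem_idealsWithClassIn_of_eval_minpoly {l : List ℕ} (hq : q.Prime)
    (hl : ∀ p ∈ l, p.Prime) (hn : ((minpoly ℤ B.gen).eval n).natAbs = q * l.prod)
    (hV : ∀ p ∈ l, degreeOnePrime B.gen p n ∈ idealsWithClassIn V) :
    degreeOnePrime B.gen q n ∈ idealsWithClassIn V := by
  have hprod := prod_degreeOnePrime_eq_span B (l := q :: l) (by simpa using ⟨hq, hl⟩) hn
  rw [List.map_cons, List.prod_cons, mul_comm] at hprod
  refine mem_idealsWithClassIn_of_mul_left (Submonoid.list_prod_mem _ (by simpa using hV))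
    (hprod ▸ span_singleton_mem_idealsWithClassIn fun hzero ↦ ?_)
  have hpos : q * l.prod ≠ 0 := mul_ne_zero hq.ne_zero
    (List.prod_ne_zero fun h ↦ Nat.not_prime_zero (hl 0 h))
  rw [← norm_algebraMap_sub_gen, eq_intCast, hzero, Algebra.norm_zero] at hn
  exact hpos hn.symm

end Monogenic

/-! ### Units modulo squares -/

section Units
variable {K : Type*} [Field K] [NumberField K]

variable (K) in
theorem exists_finset_closure_units_eq_top :
    ∃ S : Finset (𝓞 K)ˣ, S.card ≤ Units.rank K + 1 ∧ Subgroup.closure (S : Set (𝓞 K)ˣ) = ⊤ := by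
  classical
  obtain ⟨ζ, hζ⟩ := IsCyclic.exists_generator (α := Units.torsion K)
  refine ⟨insert (ζ : (𝓞 K)ˣ) (Finset.univ.image (Units.fundSystem K)), ?_, ?_⟩
  · refine (Finset.card_insert_le _ _).trans (Nat.succ_le_succ ?_)
    simpa using Finset.card_image_le (s := Finset.univ) (f := Units.fundSystem K)
  · refine top_le_iff.1 (Units.closure_fundSystem_sup_torsion_eq_top K ▸ sup_le ?_ ?_)
    · exact Subgroup.closure_mono (by simp)
    · intro x hx
      obtain ⟨k, hk⟩ := Subgroup.mem_zpowers_iff.1 (hζ ⟨x, hx⟩)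
      obtain rfl : (ζ : (𝓞 K)ˣ) ^ k = x := by simpa using congrArg Subtype.val hk
      exact zpow_mem (Subgroup.subset_closure (by simp)) k

end Units

section UnitsQuadraticChar

variable {R F : Type*} [CommRing R] [Field F] [Fintype F] [DecidableEq F]

/-- The quadratic character of the residue field `F`, pulled back along `φ` to the units of `R`. -/
noncomputable def unitsQuadraticChar (φ : R →+* F) : Rˣ →* ℤˣ :=
  (quadraticChar F).toUnitHom.comp (Units.map φ)

theorem coe_unitsQuadraticChar (φ : R →+* F) (u : Rˣ) :
    (unitsQuadraticChar φ u : ℤ) = quadraticChar F (φ u) := by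
  simp [unitsQuadraticChar]

theorem isSquare_of_forall_quadraticChar_eq_one [IsDomain R] {ι : Type*} [Fintype ι]
    {S : Finset Rˣ} (hS : Subgroup.closure (S : Set Rˣ) = ⊤) (hcard : S.card ≤ Fintype.card ι)
    {φ : ι → (R →+* F)}
    (hsurj : Function.Surjective (MonoidHom.pi fun i ↦ unitsQuadraticChar (φ i)))
    {I : Ideal R} (hI : I.IsPrincipal) {β : R} (hβ : I ^ 2 = Ideal.span {β})
    (hsq : ∀ i, quadraticChar F (φ i β) = 1) : IsSquare β := by
  obtain ⟨γ, rfl⟩ := hI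
  rw [Ideal.submodule_span_eq, Ideal.span_singleton_pow,
    Ideal.span_singleton_eq_span_singleton] at hβ
  obtain ⟨u, hu⟩ := hβ
  have hker : u ∈ (MonoidHom.pi fun i ↦ unitsQuadraticChar (φ i)).ker := by
    refine funext fun i ↦ Units.ext ?_
    have hi := hsq i
    rw [← hu, map_mul, map_mul, map_pow] at hi
    have hγ : φ i γ ≠ 0 := fun h ↦ by simp [h] at hi
    rw [quadraticChar_sq_one' hγ, one_mul] at hi
    simpa [coe_unitsQuadraticChar] using hi
  have hι : 2 ^ S.card ≤ Nat.card (ι → ℤˣ) := by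
    simpa [Nat.card_pi] using Nat.pow_le_pow_right two_pos hcard
  rw [ker_eq_range_powMonoidHom hS hsurj two_ne_zero (fun h ↦ funext fun i ↦ Int.units_sq _) hι]
    at hker
  obtain ⟨v, rfl⟩ := hker
  refine ⟨γ * v, ?_⟩
  rw [← hu, powMonoidHom_apply, Units.val_pow_eq_pow_val]
  ring

end UnitsQuadraticChar

/-! ### Discriminants and monogenicity -/

section CubicDiscr

variable {R S : Type*} [CommRing R] [CommRing S] [Algebra R S]

theorem leftMulMatrix_eq_of_pow_three_eq {b : Module.Basis (Fin 3) R S} {t : S} {p q s : R}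
    (hb : ∀ i, b i = t ^ (i : ℕ)) (ht : t ^ 3 = p • t ^ 2 + q • t + s • 1) :
    Algebra.leftMulMatrix b t = !![0, 0, s; 1, 0, q; 0, 1, p] := by
  have hcol₀ : b.equivFun (t * b 0) = ![0, 1, 0] := by
    rw [← LinearEquiv.eq_symm_apply]
    simp [Module.Basis.equivFun_symm_apply, Fin.sum_univ_three, hb]
  have hcol₁ : b.equivFun (t * b 1) = ![0, 0, 1] := by
    rw [← LinearEquiv.eq_symm_apply]
    simp [Module.Basis.equivFun_symm_apply, Fin.sum_univ_three, hb, sq]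
  have hcol₂ : b.equivFun (t * b 2) = ![s, q, p] := by
    rw [← LinearEquiv.eq_symm_apply, Module.Basis.equivFun_symm_apply, Fin.sum_univ_three]
    simp only [hb, Fin.val_zero, Fin.val_one, Fin.val_two, Matrix.cons_val, pow_zero, pow_one,
      ← pow_succ', ht]
    abel
  ext i j
  rw [Algebra.leftMulMatrix_eq_repr_mul, ← Module.Basis.equivFun_apply]
  fin_cases j
  · exact (congrFun hcol₀ i).trans (by fin_cases i <;> rfl)
  · exact (congrFun hcol₁ i).trans (by fin_cases i <;> rfl)
  · exact (congrFun hcol₂ i).trans (by fin_cases i <;> rfl)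

theorem discr_eq_of_pow_three_eq {b : Module.Basis (Fin 3) R S} {t : S} {p q s : R}
    (hb : ∀ i, b i = t ^ (i : ℕ)) (ht : t ^ 3 = p • t ^ 2 + q • t + s • 1) :
    Algebra.discr R b =
      p ^ 2 * q ^ 2 + 4 * q ^ 3 - 4 * p ^ 3 * s - 27 * s ^ 2 - 18 * p * q * s := by
  have hM := leftMulMatrix_eq_of_pow_three_eq hb ht
  have h₀ : Algebra.trace R S (t ^ 0) = 3 := by
    rw [Algebra.trace_eq_matrix_trace b, pow_zero, map_one, Matrix.trace_one]
    rfl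
  have h₁ : Algebra.trace R S (t ^ 1) = p := by
    rw [Algebra.trace_eq_matrix_trace b, pow_one, hM, Matrix.trace_fin_three_of, add_zero, zero_add]
  have h₂ : Algebra.trace R S (t ^ 2) = p ^ 2 + 2 * q := by
    rw [Algebra.trace_eq_matrix_trace b, map_pow, hM, sq, Matrix.mul_fin_three,
      Matrix.trace_fin_three_of]
    ring
  have hrec (n : ℕ) : Algebra.trace R S (t ^ (n + 3)) = p * Algebra.trace R S (t ^ (n + 2)) +
      q * Algebra.trace R S (t ^ (n + 1)) + s * Algebra.trace R S (t ^ n) := by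
    rw [pow_add, ht, mul_add, mul_add, mul_smul_comm, mul_smul_comm, mul_smul_comm, ← pow_add,
      ← pow_succ, mul_one]
    simp only [map_add, map_smul, smul_eq_mul]
  have h₃ : Algebra.trace R S (t ^ 3) = p ^ 3 + 3 * p * q + 3 * s := by
    rw [hrec 0, h₀, h₁, h₂]
    ring
  have h₄ : Algebra.trace R S (t ^ 4) = p ^ 4 + 4 * p ^ 2 * q + 4 * p * s + 2 * q ^ 2 := by
    rw [hrec 1, h₁, h₂, h₃]
    ring
  rw [Algebra.discr_def, Matrix.det_fin_three]
  simp only [Algebra.traceMatrix_apply, Algebra.traceForm_apply, hb, ← pow_add, Fin.val_zero,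
    Fin.val_one, Fin.val_two, Nat.reduceAdd, h₀, h₁, h₂, h₃, h₄]
  ring

end CubicDiscr

section NumberField

variable {K : Type*} [Field K] [NumberField K]

theorem coe_discr_int {ι : Type*} [Fintype ι] [DecidableEq ι] (v : ι → 𝓞 K) :
    (Algebra.discr ℤ v : ℚ) = Algebra.discr ℚ fun i ↦ (v i : K) := by
  rw [Algebra.discr_def, Algebra.discr_def, Int.cast_det]
  congr 1
  ext i j
  simp [Algebra.traceMatrix_apply, Algebra.traceForm_apply, Algebra.coe_trace_int]

-- The square of the index of the lattice spanned by `v` is `p ^ 2` divided by the discriminant of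
-- `K`, and the latter is not `1` by Hermite-Minkowski.
theorem isBasis_of_discr_eq_prime_sq {ι : Type*} [Fintype ι] [DecidableEq ι]
    (hι : Fintype.card ι = Module.finrank ℚ K) (hK : 1 < Module.finrank ℚ K) {p : ℤ} (hp : Prime p)
    {v : ι → 𝓞 K} (hv : Algebra.discr ℤ v = p ^ 2) :
    LinearIndependent ℤ v ∧ Submodule.span ℤ (Set.range v) = ⊤ := by
  let b : Module.Basis ι ℤ (𝓞 K) := Module.finBasisOfFinrankEq ℤ (𝓞 K)
    ((RingOfIntegers.rank K).trans hι.symm) |>.reindex (Fintype.equivFin ι).symm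
  rw [Module.Basis.is_basis_iff_det b]
  have hdiscr : b.det v ^ 2 * discr K = p ^ 2 := by
    rw [← hv, ← discr_eq_discr K b, Module.Basis.det_apply, ← Algebra.discr_of_matrix_vecMul]
    rw [Module.Basis.toMatrix_map_vecMul]
  have hp_det : ¬ p ∣ b.det v := by
    rintro ⟨c, hc⟩
    rw [hc] at hdiscr
    have hunit : c ^ 2 * discr K = 1 :=
      mul_left_cancel₀ (pow_ne_zero 2 hp.ne_zero) (by linear_combination hdiscr)
    have h2 := abs_discr_gt_two hK
    rw [Int.isUnit_iff_abs_eq.1 (.of_mul_eq_one_right _ hunit)] at h2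
    norm_num at h2
  have hcop : IsCoprime (b.det v ^ 2) (p ^ 2) :=
    ((hp.coprime_iff_not_dvd.2 hp_det).symm).pow
  exact isUnit_pow_iff two_ne_zero |>.1 (hcop.isUnit_of_dvd' dvd_rfl ⟨_, hdiscr.symm⟩)

theorem exists_powerBasis_of_discr_eq_prime_sq {n : ℕ} (hn : Module.finrank ℚ K = n) (h1 : 1 < n)
    {p : ℤ} (hp : Prime p) {θ : 𝓞 K} (hθ : Algebra.discr ℤ (fun i : Fin n ↦ θ ^ (i : ℕ)) = p ^ 2) :
    ∃ B : PowerBasis ℤ (𝓞 K), B.gen = θ := by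
  have ⟨hli, hspan⟩ := isBasis_of_discr_eq_prime_sq (by rw [Fintype.card_fin, hn]) (hn ▸ h1) hp hθ
  exact ⟨⟨θ, n, .mk hli hspan.ge, fun i ↦ Module.Basis.mk_apply hli hspan.ge i⟩, rfl⟩

theorem discr_pow_eq_of_pow_three_eq (hK : Module.finrank ℚ K = 3) {θ : 𝓞 K}
    (hdeg : (minpoly ℤ θ).natDegree = 3) {p q s : ℤ} (hθ : θ ^ 3 = p * θ ^ 2 + q * θ + s) :
    Algebra.discr ℤ (fun i : Fin 3 ↦ θ ^ (i : ℕ)) =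
      p ^ 2 * q ^ 2 + 4 * q ^ 3 - 4 * p ^ 3 * s - 27 * s ^ 2 - 18 * p * q * s := by
  have hdegK : 3 = (minpoly ℚ (θ : K)).natDegree := by
    rw [minpoly.isIntegrallyClosed_eq_field_fractions ℚ K θ.isIntegral,
      natDegree_map_eq_of_injective (algebraMap ℤ ℚ).injective_int, hdeg]
  have hli : LinearIndependent ℚ fun i : Fin 3 ↦ (θ : K) ^ (i : ℕ) :=
    (linearIndependent_pow (θ : K)).comp (Fin.cast hdegK) (Fin.cast_injective hdegK)
  let b := basisOfLinearIndependentOfCardEqFinrank hli (by rw [Fintype.card_fin, hK])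
  have hb (i : Fin 3) : b i = (θ : K) ^ (i : ℕ) := by
    rw [coe_basisOfLinearIndependentOfCardEqFinrank]
  have hpow : (θ : K) ^ 3 = (p : ℚ) • (θ : K) ^ 2 + (q : ℚ) • (θ : K) + (s : ℚ) • 1 := by
    simpa [Algebra.smul_def] using congrArg (algebraMap (𝓞 K) K) hθ
  have hdiscr := discr_eq_of_pow_three_eq hb hpow
  rw [funext hb] at hdiscr
  have hcast := coe_discr_int fun i : Fin 3 ↦ θ ^ (i : ℕ)
  simp only [map_pow, hdiscr] at hcast
  exact_mod_cast hcast

theorem nrComplexPlaces_eq_zero_of_discr_pos (hK : Module.finrank ℚ K = 3) (hd : 0 < discr K) :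
    InfinitePlace.nrComplexPlaces K = 0 := by
  have hsign := sign_discr K
  rw [Int.sign_eq_one_of_pos hd, eq_comm, neg_one_pow_eq_one_iff_even (by norm_num)] at hsign
  have hcard := InfinitePlace.card_add_two_mul_card_eq_rank K
  obtain ⟨k, hk⟩ := hsign
  omega

theorem rank_units_lt_finrank : Units.rank K < Module.finrank ℚ K := by
  have := InfinitePlace.card_add_two_mul_card_eq_rank K
  have := InfinitePlace.card_eq_nrRealPlaces_add_nrComplexPlaces K
  have := Module.finrank_pos (R := ℚ) (M := K)
  rw [Units.rank]
  omega

theorem exists_absNorm_le_of_discr_eq_sq (hK : Module.finrank ℚ K = 3) {d : ℕ}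
    (hd : discr K = d ^ 2) (C : ClassGroup (𝓞 K)) :
    ∃ I : (Ideal (𝓞 K))⁰, ClassGroup.mk0 I = C ∧ Ideal.absNorm (I : Ideal (𝓞 K)) ≤ 2 * d / 9 := by
  obtain ⟨I, hI, hnorm⟩ := exists_ideal_in_class_of_norm_le C
  have hpos : 0 < discr K := (hd ▸ sq_nonneg (d : ℤ)).lt_of_ne' (discr_ne_zero K)
  refine ⟨I, hI, ?_⟩
  rw [nrComplexPlaces_eq_zero_of_discr_pos hK hpos, hK, hd, Int.cast_pow, abs_sq,
    Int.cast_natCast, Real.sqrt_sq d.cast_nonneg] at hnorm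
  have hconst : (4 / Real.pi) ^ 0 * ((Nat.factorial 3 : ℝ) / (3 : ℕ) ^ 3 * d) = 2 * d / 9 := by
    norm_num [Nat.factorial]
    ring
  rw [hconst, le_div_iff₀ (by norm_num)] at hnorm
  rw [Nat.le_div_iff_mul_le (by norm_num)]
  exact_mod_cast hnorm

end NumberField

/-! ### Gauss periods -/

section GaussPeriod

/-- The Gauss period attached to the additive character `e` and the group of `m`-th roots of unity
of `R`. When `R` is the prime field of order `m * d + 1`, the values at units are the `d` classical
Gauss periods; the value at `0` is allowed so that products of periods are sums of periods. -/
def gaussPeriod {R E : Type*} [CommRing R] [Fintype R] [DecidableEq R] [CommRing E] (m : ℕ)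
    (e : AddChar R E) (x : R) : E :=
  ∑ a with a ^ m = 1, e (a * x)

section CommRing

variable {R E : Type*} [CommRing R] [Fintype R] [DecidableEq R] [CommRing E] {m : ℕ}
  {e : AddChar R E}

theorem gaussPeriod_zero : gaussPeriod m e 0 = (Finset.univ.filter fun a : R ↦ a ^ m = 1).card := by
  simp [gaussPeriod]

theorem gaussPeriod_units_mul {s : Rˣ} (hs : s ^ m = 1) (x : R) :
    gaussPeriod m e (s * x) = gaussPeriod m e x := by
  have hs' : (s : R) ^ m = 1 := by rw [← Units.val_pow_eq_pow_val, hs, Units.val_one]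
  refine Finset.sum_equiv s.mulRight (fun a ↦ ?_) fun a _ ↦ ?_
  · simp [mul_pow, hs']
  · rw [Units.mulRight_apply, mul_assoc]

theorem gaussPeriod_mul_gaussPeriod (hm : m ≠ 0) (x y : R) :
    gaussPeriod m e x * gaussPeriod m e y = ∑ t with t ^ m = 1, gaussPeriod m e (x + t * y) := calc
  _ = ∑ a with a ^ m = 1, e (a * x) * gaussPeriod m e (a * y) := by
    rw [gaussPeriod, Finset.sum_mul]
    refine Finset.sum_congr rfl fun a ha ↦ ?_
    rw [Finset.mem_filter_univ] at ha
    rw [← gaussPeriod_units_mul (Units.pow_ofPowEqOne ha hm) y, Units.val_ofPowEqOne]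
  _ = ∑ a with a ^ m = 1, ∑ t with t ^ m = 1, e (a * (x + t * y)) := by
    refine Finset.sum_congr rfl fun a _ ↦ ?_
    rw [gaussPeriod, Finset.mul_sum]
    refine Finset.sum_congr rfl fun t _ ↦ ?_
    rw [← AddChar.map_add_eq_mul]
    congr 1
    ring
  _ = _ := Finset.sum_comm

theorem sum_gaussPeriod [Nontrivial R] [IsDomain E] (hm : m ≠ 0) (he : e.IsPrimitive) :
    ∑ x, gaussPeriod m e x = 0 := by
  simp only [gaussPeriod]
  rw [Finset.sum_comm]
  refine Finset.sum_eq_zero fun a ha ↦ ?_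
  have ha₀ : a ≠ 0 := by
    rintro rfl
    simp [hm] at ha
  simpa [ha₀, mul_comm] using AddChar.sum_mulShift a he

end CommRing

section Field

variable {F E : Type*} [Field F] [Fintype F] [DecidableEq F] [CommRing E] {m : ℕ}
  {e : AddChar F E}

theorem gaussPeriod_eq_of_pow_eq (hm : m ≠ 0) {x y : F} (h : x ^ m = y ^ m) :
    gaussPeriod m e x = gaussPeriod m e y := by
  rcases eq_or_ne y 0 with rfl | hy
  · rw [zero_pow hm, pow_eq_zero_iff hm] at h
    rw [h]
  · have hxy : (x / y) ^ m = 1 := by rw [div_pow, h, div_self (pow_ne_zero m hy)]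
    rw [← gaussPeriod_units_mul (Units.pow_ofPowEqOne hxy hm) y, Units.val_ofPowEqOne,
      div_mul_cancel₀ x hy]

theorem sum_gaussPeriod_eq_sum_mul (hm : m ≠ 0) {ι : Type*} [Fintype ι] {r : ι → F}
    (hr : ∀ x, ∃ i, r i ^ m = x ^ m) (hinj : Function.Injective fun i ↦ r i ^ m) {α : Type*}
    {s : Finset α} {f : α → F} {c : ι → ℕ}
    (hc : ∀ i, (s.filter fun t ↦ r i ^ m = f t ^ m).card = c i) :
    ∑ t ∈ s, gaussPeriod m e (f t) = ∑ i, c i * gaussPeriod m e (r i) := by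
  classical
  choose k hk using hr
  rw [← Finset.sum_fiberwise s fun t ↦ k (f t)]
  refine Finset.sum_congr rfl fun i _ ↦ ?_
  rw [← hc, ← nsmul_eq_mul, ← Finset.sum_const]
  refine Finset.sum_congr (Finset.filter_congr fun t _ ↦ ?_) fun t ht ↦ ?_
  · exact ⟨fun h ↦ h ▸ hk _, fun h ↦ hinj ((hk _).trans h.symm)⟩
  · exact gaussPeriod_eq_of_pow_eq hm (Finset.mem_filter.1 ht).2.symm

end Field

theorem gaussPeriod_mem_of_isGalois {K E : Type*} [Field K] [Field E] [Algebra K E]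
    [FiniteDimensional K E] [IsGalois K E] {n : ℕ} [NeZero n] {ζ : E} (hζ : IsPrimitiveRoot ζ n)
    (L : IntermediateField K E) (x : ZMod n) :
    gaussPeriod (Module.finrank L E) (AddChar.zmodChar n hζ.pow_eq_one) x ∈ L := by
  rw [← IsGalois.fixedField_fixingSubgroup L, IntermediateField.mem_fixedField_iff]
  intro σ hσ
  have hpow : hζ.autToPow K σ ^ Module.finrank L E = 1 := by
    have hσpow : σ ^ Nat.card L.fixingSubgroup = 1 :=
      congrArg Subtype.val (pow_card_eq_one' (x := (⟨σ, hσ⟩ : L.fixingSubgroup)))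
    rw [← map_pow, ← IsGalois.card_fixingSubgroup_eq_finrank, hσpow, map_one]
  have hσe (a : ZMod n) : σ (AddChar.zmodChar n hζ.pow_eq_one a) =
      AddChar.zmodChar n hζ.pow_eq_one (hζ.autToPow K σ * a) := by
    rw [AddChar.zmodChar_apply, AddChar.zmodChar_apply, map_pow, ← hζ.autToPow_spec K σ, ← pow_mul,
      ZMod.val_mul]
    exact pow_eq_pow_mod _ hζ.pow_eq_one
  rw [IsGalois.fixedField_fixingSubgroup]
  refine Eq.trans ?_ (gaussPeriod_units_mul hpow x)
  simp only [gaussPeriod, map_sum, hσe, mul_left_comm]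

end GaussPeriod

/-! ### The cubic field of conductor 163 -/

section PeriodCubic

/-- The minimal polynomial of `η + 4`, where `η` is a cubic Gauss period of conductor `163`. -/
noncomputable def periodCubic : ℤ[X] := X ^ 3 - 11 * X ^ 2 - 14 * X - 1

theorem eval_periodCubic (n : ℤ) : periodCubic.eval n = n ^ 3 - 11 * n ^ 2 - 14 * n - 1 := by
  simp [periodCubic]

theorem natDegree_periodCubic : periodCubic.natDegree = 3 := by
  rw [periodCubic]
  compute_degree!

theorem not_dvd_eval_periodCubic {q : ℕ} (h : ∀ x : ZMod q, x ^ 3 - 11 * x ^ 2 - 14 * x - 1 ≠ 0)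
    (n : ℤ) : ¬ (q : ℤ) ∣ periodCubic.eval n := by
  rw [← ZMod.intCast_zmod_eq_zero_iff_dvd, eval_periodCubic]
  simpa using h n

theorem finrank_eq_three_of_periodCubic {R : Type*} [CommRing R] [Nontrivial R] (B : PowerBasis ℤ R)
    (hB : minpoly ℤ B.gen = periodCubic) : Module.finrank ℤ R = 3 := by
  rw [B.finrank, ← B.natDegree_minpoly, hB, natDegree_periodCubic]

theorem monic_periodCubic : periodCubic.Monic := by
  rw [periodCubic]
  monicity!

theorem irreducible_periodCubic : Irreducible periodCubic := by
  rw [monic_periodCubic.irreducible_iff_roots_eq_zero_of_degree_le_three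
    (by rw [natDegree_periodCubic]; norm_num) natDegree_periodCubic.le]
  refine Multiset.eq_zero_of_forall_notMem fun n hn ↦ ?_
  exact not_dvd_eval_periodCubic (q := 2) (by decide) n ((isRoot_of_mem_roots hn).symm ▸ dvd_zero _)

theorem minpoly_eq_periodCubic {R : Type*} [CommRing R] [IsDomain R] [CharZero R] {θ : R}
    (hθ : θ ^ 3 = 11 * θ ^ 2 + 14 * θ + 1) : minpoly ℤ θ = periodCubic := by
  have haeval : aeval θ periodCubic = 0 := by
    simp only [periodCubic, map_sub, map_mul, map_pow, aeval_X, map_ofNat, map_one]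
    linear_combination hθ
  have hint : IsIntegral ℤ θ := ⟨periodCubic, monic_periodCubic, haeval⟩
  refine eq_of_monic_of_associated (minpoly.monic hint) monic_periodCubic ?_
  exact (minpoly.prime_of_isIntegrallyClosed hint).irreducible.associated_of_dvd
    irreducible_periodCubic (minpoly.isIntegrallyClosed_dvd hint haeval)

section Relations

variable {R : Type*} [CommRing R] [IsDedekindDomain R] [Module.Free ℤ R] [Module.Finite ℤ R]
  {V : Subgroup (ClassGroup R)} {B : PowerBasis ℤ R}

theorem degreeOnePrime_mem_of_roots (hB : minpoly ℤ B.gen = periodCubic) {q : ℕ} (hq : q.Prime)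
    {r : Fin 3 → ℤ} (hr : ∀ i, (q : ℤ) ∣ periodCubic.eval (r i))
    (hinj : Function.Injective fun i ↦ (r i : ZMod q)) (j : Fin 3)
    (hV : ∀ i ≠ j, degreeOnePrime B.gen q (r i) ∈ idealsWithClassIn V) {n : ℤ}
    (hn : (q : ℤ) ∣ periodCubic.eval n) : degreeOnePrime B.gen q n ∈ idealsWithClassIn V :=
  degreeOnePrime_mem_idealsWithClassIn B hq
    ((Fintype.card_fin 3).trans (finrank_eq_three_of_periodCubic B hB).symm) (by rwa [hB]) hinj j hV
    (by rwa [hB])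

theorem degreeOnePrime_mem_of_eval_eq (hB : minpoly ℤ B.gen = periodCubic) {q : ℕ} (hq : q.Prime)
    {n : ℤ} {l : List ℕ} (hl : ∀ p ∈ l, p.Prime) (hn : (periodCubic.eval n).natAbs = q * l.prod)
    (hV : ∀ p ∈ l, degreeOnePrime B.gen p n ∈ idealsWithClassIn V) {m : ℤ} (hm : (q : ℤ) ∣ m - n) :
    degreeOnePrime B.gen q m ∈ idealsWithClassIn V := by
  rw [degreeOnePrime_congr hm]
  exact degreeOnePrime_mem_idealsWithClassIn_of_eval_minpoly B hq hl (by rwa [hB]) hV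

theorem degreeOnePrime_seventeen_mem_and_twentyThree_mem (hB : minpoly ℤ B.gen = periodCubic)
    (h5 : ∀ n, 5 ∣ periodCubic.eval n → degreeOnePrime B.gen 5 n ∈ idealsWithClassIn V) :
    (∀ n, 17 ∣ periodCubic.eval n → degreeOnePrime B.gen 17 n ∈ idealsWithClassIn V) ∧
    ∀ n, 23 ∣ periodCubic.eval n → degreeOnePrime B.gen 23 n ∈ idealsWithClassIn V := by
  have h17_14 : degreeOnePrime B.gen 17 14 ∈ idealsWithClassIn V :=
    degreeOnePrime_mem_of_eval_eq hB (n := -3) (l := [5]) (by norm_num) (by norm_num)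
      (by norm_num [eval_periodCubic]) (by simp [h5, eval_periodCubic]) (by norm_num)
  have h23_26 : degreeOnePrime B.gen 23 26 ∈ idealsWithClassIn V :=
    degreeOnePrime_mem_of_eval_eq hB (n := 3) (l := [5]) (by norm_num) (by norm_num)
      (by norm_num [eval_periodCubic]) (by simp [h5, eval_periodCubic]) (by norm_num)
  have h17_9 : degreeOnePrime B.gen 17 9 ∈ idealsWithClassIn V :=
    degreeOnePrime_mem_of_eval_eq hB (n := 26) (l := [5, 5, 23]) (by norm_num) (by norm_num)
      (by norm_num [eval_periodCubic]) (by simp [h5, eval_periodCubic, h23_26]) (by norm_num)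
  have h23_14 : degreeOnePrime B.gen 23 14 ∈ idealsWithClassIn V :=
    degreeOnePrime_mem_of_eval_eq hB (n := 14) (l := [17]) (by norm_num) (by norm_num)
      (by norm_num [eval_periodCubic]) (by simp [h17_14]) (by norm_num)
  constructor
  · exact fun n ↦ degreeOnePrime_mem_of_roots hB (q := 17) (r := ![5, 9, 14]) (by norm_num)
      (by simp [Fin.forall_fin_succ, eval_periodCubic]) (by decide) 0
      (by simp [Fin.forall_fin_succ, h17_9, h17_14])
  · exact fun n ↦ degreeOnePrime_mem_of_roots hB (q := 23) (r := ![26, 14, 17]) (by norm_num)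
      (by simp [Fin.forall_fin_succ, eval_periodCubic]) (by decide) 2
      (by simp [Fin.forall_fin_succ, h23_26, h23_14])

theorem degreeOnePrime_thirteen_mem (hB : minpoly ℤ B.gen = periodCubic)
    (h5 : ∀ n, 5 ∣ periodCubic.eval n → degreeOnePrime B.gen 5 n ∈ idealsWithClassIn V)
    (h17 : ∀ n, 17 ∣ periodCubic.eval n → degreeOnePrime B.gen 17 n ∈ idealsWithClassIn V)
    (n : ℤ) (hn : 13 ∣ periodCubic.eval n) : degreeOnePrime B.gen 13 n ∈ idealsWithClassIn V := by
  have h13_2 : degreeOnePrime B.gen 13 2 ∈ idealsWithClassIn V :=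
    degreeOnePrime_mem_of_eval_eq hB (n := 2) (l := [5]) (by norm_num) (by norm_num)
      (by norm_num [eval_periodCubic]) (by simp [h5, eval_periodCubic]) (by norm_num)
  have h13_5 : degreeOnePrime B.gen 13 5 ∈ idealsWithClassIn V :=
    degreeOnePrime_mem_of_eval_eq hB (n := 5) (l := [17]) (by norm_num) (by norm_num)
      (by norm_num [eval_periodCubic]) (by simp [h17, eval_periodCubic]) (by norm_num)
  exact degreeOnePrime_mem_of_roots hB (q := 13) (r := ![2, 5, 4]) (by norm_num)
    (by simp [Fin.forall_fin_succ, eval_periodCubic]) (by decide) 2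
    (by simp [Fin.forall_fin_succ, h13_2, h13_5]) hn

theorem degreeOnePrime_thirtyOne_mem (hB : minpoly ℤ B.gen = periodCubic)
    (h5 : ∀ n, 5 ∣ periodCubic.eval n → degreeOnePrime B.gen 5 n ∈ idealsWithClassIn V)
    (n : ℤ) (hn : 31 ∣ periodCubic.eval n) : degreeOnePrime B.gen 31 n ∈ idealsWithClassIn V := by
  have h31_11 : degreeOnePrime B.gen 31 11 ∈ idealsWithClassIn V :=
    degreeOnePrime_mem_of_eval_eq hB (n := 11) (l := [5]) (by norm_num) (by norm_num)
      (by norm_num [eval_periodCubic]) (by simp [h5, eval_periodCubic]) (by norm_num)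
  have h31_13 : degreeOnePrime B.gen 31 13 ∈ idealsWithClassIn V :=
    degreeOnePrime_mem_of_eval_eq hB (n := 13) (l := [5]) (by norm_num) (by norm_num)
      (by norm_num [eval_periodCubic]) (by simp [h5, eval_periodCubic]) (by norm_num)
  exact degreeOnePrime_mem_of_roots hB (q := 31) (r := ![11, 13, 18]) (by norm_num)
    (by simp [Fin.forall_fin_succ, eval_periodCubic]) (by decide) 2
    (by simp [Fin.forall_fin_succ, h31_11, h31_13]) hn

theorem degreeOnePrime_mem_of_le_thirtySix (hB : minpoly ℤ B.gen = periodCubic)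
    (h₁ : degreeOnePrime B.gen 5 1 ∈ idealsWithClassIn V)
    (h₂ : degreeOnePrime B.gen 5 2 ∈ idealsWithClassIn V) {q : ℕ} (hq : q ≤ 36) (hq' : q.Prime)
    {n : ℤ} (hn : (q : ℤ) ∣ periodCubic.eval n) :
    degreeOnePrime B.gen q n ∈ idealsWithClassIn V := by
  have h5 (n : ℤ) (hn : 5 ∣ periodCubic.eval n) : degreeOnePrime B.gen 5 n ∈ idealsWithClassIn V :=
    degreeOnePrime_mem_of_roots hB (q := 5) (r := ![1, 2, 3]) (by norm_num)
      (by simp [Fin.forall_fin_succ, eval_periodCubic]) (by decide) 2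
      (by simp [Fin.forall_fin_succ, h₁, h₂]) hn
  obtain ⟨h17, h23⟩ := degreeOnePrime_seventeen_mem_and_twentyThree_mem hB h5
  have hprimes : ∀ q ≤ 36, q.Prime →
      q ∈ ({2, 3, 7, 11, 19, 29} : Finset ℕ) ∨ q ∈ ({5, 13, 17, 23, 31} : Finset ℕ) := by decide
  simp only [Finset.mem_insert, Finset.mem_singleton] at hprimes
  obtain (rfl | rfl | rfl | rfl | rfl | rfl) | (rfl | rfl | rfl | rfl | rfl) := hprimes q hq hq'
  iterate 6 exact absurd hn (not_dvd_eval_periodCubic (by decide) n)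
  · exact h5 n hn
  · exact degreeOnePrime_thirteen_mem hB h5 h17 n hn
  · exact h17 n hn
  · exact h23 n hn
  · exact degreeOnePrime_thirtyOne_mem hB h5 n hn

end Relations

section Squares

variable {R : Type*} [CommRing R] {B : PowerBasis ℤ R}

theorem gen_pow_three_of_periodCubic (hB : minpoly ℤ B.gen = periodCubic) :
    B.gen ^ 3 = 11 * B.gen ^ 2 + 14 * B.gen + 1 := by
  have h := minpoly.aeval ℤ B.gen
  simp only [hB, periodCubic, map_sub, map_mul, map_pow, aeval_X, map_ofNat, map_one] at h
  linear_combination h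

theorem exists_units_eq_gen (hB : minpoly ℤ B.gen = periodCubic) :
    ∃ u v : Rˣ, (u : R) = -B.gen ∧ (v : R) = B.gen + 1 := by
  have h := gen_pow_three_of_periodCubic hB
  exact ⟨.mkOfMulEqOne _ (-(B.gen ^ 2 - 11 * B.gen - 14)) (by linear_combination h),
    .mkOfMulEqOne _ (-(B.gen ^ 2 - 12 * B.gen - 2)) (by linear_combination -h), rfl, rfl⟩

local instance : Fact (Nat.Prime 23) := ⟨by norm_num⟩

theorem exists_surjective_unitsQuadraticChar (hB : minpoly ℤ B.gen = periodCubic) :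
    ∃ φ : Fin 3 → (R →+* ZMod 23),
      Function.Surjective (MonoidHom.pi fun i ↦ unitsQuadraticChar (φ i)) := by
  have hφ (i : Fin 3) : ∃ φ : R →+* ZMod 23, φ B.gen = (![3, 14, 17] i : ℤ) :=
    exists_ringHom_zmod B (by revert i; simp [hB, Fin.forall_fin_succ, eval_periodCubic])
  choose φ hφ using hφ
  obtain ⟨u, v, hu, hv⟩ := exists_units_eq_gen hB
  have hgen (i : Fin 3) : ((![u, v, -u * v] i : Rˣ) : R) =
      ![-B.gen, B.gen + 1, B.gen * (B.gen + 1)] i := by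
    fin_cases i <;> simp [hu, hv]
  have hchar : ∀ i j : Fin 3, quadraticChar (ZMod 23) (![-((![3, 14, 17] j : ℤ) : ZMod 23),
      (![3, 14, 17] j : ℤ) + 1, (![3, 14, 17] j : ℤ) * ((![3, 14, 17] j : ℤ) + 1)] i) =
      (Pi.mulSingle i (-1) : Fin 3 → ℤˣ) j := by decide
  refine ⟨φ, surjective_of_forall_eq_mulSingle _ ![u, v, -u * v] fun i ↦ funext fun j ↦ ?_⟩
  rw [Units.ext_iff, MonoidHom.pi_apply, coe_unitsQuadraticChar, hgen, ← hchar, ← hφ j]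
  fin_cases i <;> simp

theorem ringHom_gen_pow_three_of_periodCubic (hB : minpoly ℤ B.gen = periodCubic) {A : Type*}
    [CommRing A] (φ : R →+* A) : φ B.gen ^ 3 = 11 * φ B.gen ^ 2 + 14 * φ B.gen + 1 := by
  simpa only [map_add, map_mul, map_pow, map_one, map_ofNat] using
    congrArg φ (gen_pow_three_of_periodCubic hB)

theorem quadraticChar_gen_sub_one (hB : minpoly ℤ B.gen = periodCubic) (φ : R →+* ZMod 23) :
    quadraticChar (ZMod 23) (φ (B.gen - 1)) = 1 := by
  have key : ∀ x : ZMod 23, x ^ 3 = 11 * x ^ 2 + 14 * x + 1 →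
      quadraticChar (ZMod 23) (x - 1) = 1 := by decide
  simpa only [map_sub, map_one] using key _ (ringHom_gen_pow_three_of_periodCubic hB φ)

theorem quadraticChar_gen_add_one_mul (hB : minpoly ℤ B.gen = periodCubic) (φ : R →+* ZMod 23) :
    quadraticChar (ZMod 23) (φ ((B.gen + 1) * (12 - B.gen))) = 1 := by
  have key : ∀ x : ZMod 23, x ^ 3 = 11 * x ^ 2 + 14 * x + 1 →
      quadraticChar (ZMod 23) ((x + 1) * (12 - x)) = 1 := by decide
  simpa only [map_sub, map_mul, map_add, map_one, map_ofNat] using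
    key _ (ringHom_gen_pow_three_of_periodCubic hB φ)

variable [IsDedekindDomain R]

-- If `I = (γ)` then `β = u * γ ^ 2` for a unit `u`, and the hypothesis on `β` forces `u` to be a
-- square; but `ψ` shows that `β` is not one.
theorem not_isPrincipal_of_sq_eq_span (hB : minpoly ℤ B.gen = periodCubic) {S : Finset Rˣ}
    (hS : Subgroup.closure (S : Set Rˣ) = ⊤) (hcard : S.card ≤ 3) {I : Ideal R} {β : R}
    (hβ : I ^ 2 = Ideal.span {β}) (hsq : ∀ φ : R →+* ZMod 23, quadraticChar (ZMod 23) (φ β) = 1)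
    {A : Type*} [CommRing A] {ψ : R →+* A} (hψ : ¬ IsSquare (ψ β)) : ¬ I.IsPrincipal := fun hI ↦ by
  obtain ⟨φ, hφ⟩ := exists_surjective_unitsQuadraticChar hB
  exact hψ ((isSquare_of_forall_quadraticChar_eq_one hS (by simpa using hcard) hφ hI hβ
    fun i ↦ hsq (φ i)).map ψ)

variable [Module.Free ℤ R] [Module.Finite ℤ R]

theorem degreeOnePrime_five_one_sq (hB : minpoly ℤ B.gen = periodCubic) :
    degreeOnePrime B.gen 5 1 ^ 2 = Ideal.span {B.gen - 1} := by
  have h := prod_degreeOnePrime_eq_span B (n := 1) (l := [5, 5]) (by norm_num)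
    (by norm_num [hB, eval_periodCubic])
  rw [← Ideal.span_singleton_neg, sq]
  simpa using h

theorem degreeOnePrime_five_two_sq (hB : minpoly ℤ B.gen = periodCubic) :
    degreeOnePrime B.gen 5 2 ^ 2 = Ideal.span {(B.gen + 1) * (12 - B.gen)} := by
  have h := prod_degreeOnePrime_eq_span B (n := 12) (l := [5, 5]) (by norm_num)
    (by norm_num [hB, eval_periodCubic])
  obtain ⟨-, v, -, hv⟩ := exists_units_eq_gen hB
  rw [← hv, Ideal.span_singleton_mul_left_unit v.isUnit, sq,
    ← degreeOnePrime_congr (m := 12) (by norm_num)]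
  simpa using h

theorem not_isPrincipal_degreeOnePrime_five (hB : minpoly ℤ B.gen = periodCubic) {S : Finset Rˣ}
    (hS : Subgroup.closure (S : Set Rˣ) = ⊤) (hcard : S.card ≤ 3) :
    ¬ (degreeOnePrime B.gen 5 1).IsPrincipal ∧ ¬ (degreeOnePrime B.gen 5 2).IsPrincipal ∧
      ¬ (degreeOnePrime B.gen 5 1 * degreeOnePrime B.gen 5 2).IsPrincipal := by
  obtain ⟨ψ, hψ⟩ := exists_ringHom_zmod B (q := 31) (n := 18) (by norm_num [hB, eval_periodCubic])
  obtain ⟨ψ', hψ'⟩ := exists_ringHom_zmod B (q := 31) (n := 11) (by norm_num [hB, eval_periodCubic])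
  have h₁ := degreeOnePrime_five_one_sq hB
  have h₂ := degreeOnePrime_five_two_sq hB
  have h₁₂ : (degreeOnePrime B.gen 5 1 * degreeOnePrime B.gen 5 2) ^ 2 =
      Ideal.span {(B.gen - 1) * ((B.gen + 1) * (12 - B.gen))} := by
    rw [mul_pow, h₁, h₂, Ideal.span_singleton_mul_span_singleton]
  refine ⟨not_isPrincipal_of_sq_eq_span hB hS hcard h₁ (quadraticChar_gen_sub_one hB) (ψ := ψ) ?_,
    not_isPrincipal_of_sq_eq_span hB hS hcard h₂ (quadraticChar_gen_add_one_mul hB) (ψ := ψ') ?_,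
    not_isPrincipal_of_sq_eq_span hB hS hcard h₁₂ (fun φ ↦ ?_) (ψ := ψ) ?_⟩
  · simp only [map_sub, hψ, map_one]
    decide
  · simp only [map_sub, map_mul, map_add, hψ', map_one, map_ofNat]
    decide
  · rw [map_mul, map_mul, quadraticChar_gen_sub_one hB, quadraticChar_gen_add_one_mul hB, one_mul]
  · simp only [map_sub, map_mul, map_add, hψ, map_one, map_ofNat]
    decide

end Squares

section ClassGroup

variable {K : Type*} [Field K] [NumberField K]

theorem discr_pow_eq_of_periodCubic (hK : Module.finrank ℚ K = 3) {θ : 𝓞 K}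
    (hθ : θ ^ 3 = 11 * θ ^ 2 + 14 * θ + 1) :
    Algebra.discr ℤ (fun i : Fin 3 ↦ θ ^ (i : ℕ)) = 163 ^ 2 := by
  have hdeg : (minpoly ℤ θ).natDegree = 3 := by
    rw [minpoly_eq_periodCubic hθ, natDegree_periodCubic]
  rw [discr_pow_eq_of_pow_three_eq hK hdeg (p := 11) (q := 14) (s := 1) (by simpa using hθ)]
  norm_num

theorem exists_powerBasis_minpoly_eq_periodCubic (hK : Module.finrank ℚ K = 3) {θ : 𝓞 K}
    (hθ : θ ^ 3 = 11 * θ ^ 2 + 14 * θ + 1) :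
    ∃ B : PowerBasis ℤ (𝓞 K), minpoly ℤ B.gen = periodCubic := by
  obtain ⟨B, rfl⟩ := exists_powerBasis_of_discr_eq_prime_sq hK (by norm_num)
    (Int.prime_iff_natAbs_prime.2 (by norm_num)) (discr_pow_eq_of_periodCubic hK hθ)
  exact ⟨B, minpoly_eq_periodCubic hθ⟩

theorem discr_eq_of_periodCubic (hK : Module.finrank ℚ K = 3) {B : PowerBasis ℤ (𝓞 K)}
    (hB : minpoly ℤ B.gen = periodCubic) : discr K = 163 ^ 2 := by
  have hdim : B.dim = 3 := by rw [← B.natDegree_minpoly, hB, natDegree_periodCubic]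
  rw [← discr_pow_eq_of_periodCubic hK (gen_pow_three_of_periodCubic hB),
    ← discr_eq_discr K (B.basis.reindex (finCongr hdim))]
  congr 1
  ext i
  simp

theorem isKleinFour_classGroup_of_periodCubic (hK : Module.finrank ℚ K = 3) {B : PowerBasis ℤ (𝓞 K)}
    (hB : minpoly ℤ B.gen = periodCubic) : IsKleinFour (ClassGroup (𝓞 K)) := by
  have hmem {n : ℤ} (hn : 5 ∣ periodCubic.eval n) : degreeOnePrime B.gen 5 n ∈ (Ideal (𝓞 K))⁰ := by
    refine mem_nonZeroDivisors_iff_ne_zero.2 fun h ↦ ?_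
    have := absNorm_degreeOnePrime B Nat.prime_five (hB ▸ hn)
    rw [h, map_zero] at this
    norm_num at this
  let P : (Ideal (𝓞 K))⁰ := ⟨degreeOnePrime B.gen 5 1, hmem (by norm_num [eval_periodCubic])⟩
  let Q : (Ideal (𝓞 K))⁰ := ⟨degreeOnePrime B.gen 5 2, hmem (by norm_num [eval_periodCubic])⟩
  have hclosure : Subgroup.closure {ClassGroup.mk0 P, ClassGroup.mk0 Q} = ⊤ := by
    refine eq_top_of_forall_degreeOnePrime_mem B (finrank_eq_three_of_periodCubic B hB)
      (exists_absNorm_le_of_discr_eq_sq hK (d := 163) (discr_eq_of_periodCubic hK hB))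
      fun q hq hq' n hn ↦ degreeOnePrime_mem_of_le_thirtySix hB ?_ ?_ hq hq' (hB ▸ hn)
    · exact coe_mem_idealsWithClassIn.2 (Subgroup.subset_closure (.inl rfl) : ClassGroup.mk0 P ∈ _)
    · exact coe_mem_idealsWithClassIn.2 (Subgroup.subset_closure (.inr rfl) : ClassGroup.mk0 Q ∈ _)
  obtain ⟨S, hcard, hS⟩ := exists_finset_closure_units_eq_top K
  obtain ⟨hP, hQ, hPQ⟩ := not_isPrincipal_degreeOnePrime_five hB hS
    (hcard.trans (hK ▸ rank_units_lt_finrank))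
  refine isKleinFour_of_closure_pair_eq_top hclosure ?_ ?_ ?_ ?_ ?_
  · rw [← map_pow, ClassGroup.mk0_eq_one_iff]
    exact ⟨_, degreeOnePrime_five_one_sq hB⟩
  · rw [← map_pow, ClassGroup.mk0_eq_one_iff]
    exact ⟨_, degreeOnePrime_five_two_sq hB⟩
  · exact fun h ↦ hP ((ClassGroup.mk0_eq_one_iff _).1 h)
  · exact fun h ↦ hQ ((ClassGroup.mk0_eq_one_iff _).1 h)
  · rw [← map_mul]
    exact fun h ↦ hPQ ((ClassGroup.mk0_eq_one_iff _).1 h)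

end ClassGroup

theorem exists_ringOfIntegers_pow_three_eq {K : Type*} [Field K] {t : K}
    (ht : t ^ 3 = 11 * t ^ 2 + 14 * t + 1) : ∃ θ : 𝓞 K, θ ^ 3 = 11 * θ ^ 2 + 14 * θ + 1 := by
  have hint : IsIntegral ℤ t := by
    refine ⟨periodCubic, monic_periodCubic, ?_⟩
    simp only [periodCubic, eval₂_sub, eval₂_mul, eval₂_pow, eval₂_X, eval₂_ofNat, eval₂_one]
    linear_combination ht
  refine ⟨⟨t, hint⟩, RingOfIntegers.coe_injective ?_⟩
  simp only [map_add, map_mul, map_ofNat, map_one]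
  exact ht

end PeriodCubic

section CubicSubfield

local instance : Fact (Nat.Prime 163) := ⟨by norm_num⟩

variable {E : Type*} [CommRing E] {e : AddChar (ZMod 163) E}

-- `0`, `1`, `2` and `4` represent the orbits of the `54`-th roots of unity on `ZMod 163`.
theorem sum_gaussPeriod_eq_of_card {α : Type*} {s : Finset α} {f : α → ZMod 163} {c : Fin 4 → ℕ}
    (hc : ∀ i, (s.filter fun t ↦ (![0, 1, 2, 4] i : ZMod 163) ^ 54 = f t ^ 54).card = c i) :
    ∑ t ∈ s, gaussPeriod 54 e (f t) = c 0 * 54 + c 1 * gaussPeriod 54 e 1 +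
      c 2 * gaussPeriod 54 e 2 + c 3 * gaussPeriod 54 e 4 := by
  have hzero : gaussPeriod 54 e 0 = 54 := by
    rw [gaussPeriod_zero, show (Finset.univ.filter fun a : ZMod 163 ↦ a ^ 54 = 1).card = 54 by
      decide +kernel, Nat.cast_ofNat]
  rw [sum_gaussPeriod_eq_sum_mul (by norm_num) (by decide +kernel) (by decide +kernel) hc,
    Fin.sum_univ_four]
  simp only [Matrix.cons_val, hzero]

variable [IsDomain E] [CharZero E]

theorem gaussPeriod_add_eq_neg_one (he : e.IsPrimitive) :
    gaussPeriod 54 e 1 + gaussPeriod 54 e 2 + gaussPeriod 54 e 4 = -1 := by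
  have hsum := sum_gaussPeriod (m := 54) (by norm_num) he
  rw [sum_gaussPeriod_eq_of_card (c := ![1, 54, 54, 54]) (by decide +kernel)] at hsum
  simp only [Matrix.cons_val] at hsum
  push_cast at hsum
  refine mul_left_cancel₀ (OfNat.ofNat_ne_zero 54) ?_
  linear_combination hsum

theorem gaussPeriod_cubic (he : e.IsPrimitive) :
    gaussPeriod 54 e 1 ^ 3 + gaussPeriod 54 e 1 ^ 2 - 54 * gaussPeriod 54 e 1 - 169 = 0 := by
  have hsum := gaussPeriod_add_eq_neg_one he
  have h₁ := gaussPeriod_mul_gaussPeriod (e := e) (m := 54) (by norm_num) 1 1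
  have h₂ := gaussPeriod_mul_gaussPeriod (e := e) (m := 54) (by norm_num) 1 2
  have h₄ := gaussPeriod_mul_gaussPeriod (e := e) (m := 54) (by norm_num) 1 4
  -- The entries of `c` are the cyclotomic numbers of order `3` modulo `163`.
  rw [sum_gaussPeriod_eq_of_card (c := ![1, 20, 17, 16]) (by decide +kernel)] at h₁
  rw [sum_gaussPeriod_eq_of_card (c := ![0, 17, 16, 21]) (by decide +kernel)] at h₂
  rw [sum_gaussPeriod_eq_of_card (c := ![0, 16, 21, 17]) (by decide +kernel)] at h₄
  simp only [Matrix.cons_val] at h₁ h₂ h₄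
  push_cast at h₁ h₂ h₄
  linear_combination (gaussPeriod 54 e 1 + 21) * h₁ + 17 * h₂ + 16 * h₄ + 965 * hsum

theorem exists_gaussPeriod_cubic_of_finrank_eq_three {E : Type*} [Field E] [CharZero E]
    [IsCyclotomicExtension {163} ℚ E] (L : IntermediateField ℚ E)
    (hL : Module.finrank ℚ L = 3) : ∃ η : L, η ^ 3 + η ^ 2 - 54 * η - 169 = 0 := by
  have : IsGalois ℚ E := IsCyclotomicExtension.isGalois {163} ℚ E
  have : FiniteDimensional ℚ E := IsCyclotomicExtension.finiteDimensional {163} ℚ E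
  have hζ := IsCyclotomicExtension.zeta_spec 163 ℚ E
  have hrank : Module.finrank L E = 54 := by
    have hdeg : Module.finrank ℚ E = 162 := by
      rw [IsCyclotomicExtension.finrank (n := 163) E (cyclotomic.irreducible_rat (by norm_num)),
        Nat.totient_prime Fact.out]
    have hmul := Module.finrank_mul_finrank ℚ L E
    rw [hL, hdeg] at hmul
    omega
  have hmem := gaussPeriod_mem_of_isGalois hζ L 1
  rw [hrank] at hmem
  exact ⟨⟨_, hmem⟩, Subtype.ext <|
    gaussPeriod_cubic (AddChar.zmodChar_primitive_of_primitive_root 163 hζ)⟩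

end CubicSubfield

/-- Let `ℓ = 163` and let `L` be the unique degree-3 intermediate field of `ℚ(ζ_ℓ)/ℚ`.
Then the class number of `L` is `4` and the ideal class group of `L` is isomorphic to
`(ℤ/2ℤ) × (ℤ/2ℤ)`. -/
theorem classGroup_of_cubic_subfield_163
    (L : IntermediateField ℚ (CyclotomicField 163 ℚ)) (hL : Module.finrank ℚ L = 3) :
    NumberField.classNumber L = 4 ∧
    Nonempty (ClassGroup (NumberField.RingOfIntegers L) ≃*
      Multiplicative (ZMod 2 × ZMod 2)) := by
  have : IsCyclotomicExtension {163} ℚ (CyclotomicField 163 ℚ) :=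
    CyclotomicField.isCyclotomicExtension _ _
  obtain ⟨η, hη⟩ := exists_gaussPeriod_cubic_of_finrank_eq_three L hL
  have hcubic : (η + 4) ^ 3 = 11 * (η + 4) ^ 2 + 14 * (η + 4) + 1 := by linear_combination hη
  obtain ⟨θ, hθ⟩ := exists_ringOfIntegers_pow_three_eq hcubic
  obtain ⟨B, hB⟩ := exists_powerBasis_minpoly_eq_periodCubic hL hθ
  have hklein := isKleinFour_classGroup_of_periodCubic hL hB
  refine ⟨?_, IsKleinFour.nonempty_mulEquiv⟩
  rw [classNumber, ← Nat.card_eq_fintype_card, IsKleinFour.card_four]
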